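/- arXiv:1703.10412 — 2 statements merged into one kernel-verified Lean document; each statement's English description precedes it below -/
import Mathlib

section
/- For i = 1, 2, let X_i be a dynamical set over Λ of PH type and T_i a ternary operation on Λ satisfying (E1) and (E2), and let σ_i = σ_{T_i} be the associated dynamical Yang–Baxter map on X_i. Then (X_1, σ_1) and (X_2, σ_2) are equivalent — i.e. there exists an isomorphism f : X_1 → X_2 of dynamical sets with (f ⊗ f)(λ) ∘ σ_1(λ) = σ_2(λ) ∘ (f ⊗ f)(λ) for all λ ∈ Λ, where (f ⊗ f)(λ)(x, y) = (f(λ)(x), f(λ ◁ x)(y)) — if and only if T_1 = T_2. -/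
/-- Equation (E1) for a ternary operation `T` on `Λ`. -/
def TernE1 {Λ : Type*} (T : Λ → Λ → Λ → Λ) : Prop :=
  ∀ a b c d, T a (T a b c) (T (T a b c) c d) = T a b (T b c d)

/-- Equation (E2) for a ternary operation `T` on `Λ`. -/
def TernE2 {Λ : Type*} (T : Λ → Λ → Λ → Λ) : Prop :=
  ∀ a b c d, T (T a b c) c d = T (T a b (T b c d)) (T b c d) d

/-- The left component `x ⇀_λ y = λ \ ⟨λ, λ◁x, (λ◁x)◁y⟩` of `σ_T`. -/
def sigmaTL {Λ X : Type*} (act : Λ → X → Λ) (dv : Λ → Λ → X)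
    (T : Λ → Λ → Λ → Λ) : Λ → X → X → X :=
  fun lam x y => dv lam (T lam (act lam x) (act (act lam x) y))

/-- The right component `x ↼_λ y = ⟨λ, λ◁x, (λ◁x)◁y⟩ \ ((λ◁x)◁y)` of `σ_T`. -/
def sigmaTR {Λ X : Type*} (act : Λ → X → Λ) (dv : Λ → Λ → X)
    (T : Λ → Λ → Λ → Λ) : Λ → X → X → X :=
  fun lam x y => dv (T lam (act lam x) (act (act lam x) y)) (act (act lam x) y)

/-- The dynamical Yang–Baxter map `σ_T` as a family of maps on `X × X`. -/
def sigmaTMap {Λ X : Type*} (act : Λ → X → Λ) (dv : Λ → Λ → X)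
    (T : Λ → Λ → Λ → Λ) : Λ → X × X → X × X :=
  fun lam p => (sigmaTL act dv T lam p.1 p.2, sigmaTR act dv T lam p.1 p.2)

/-- `(g ⊗ g)(λ)(x, y) = (g(λ)(x), g(λ ◁ x)(y))`, where `◁` is the structure map
of the domain. -/
def tensorSq {Λ X Y : Type*} (actX : Λ → X → Λ) (g : Λ → X → Y) :
    Λ → X × X → Y × Y :=
  fun lam p => (g lam p.1, g (actX lam p.1) p.2)

/-!
A pair `(x, y)` read from `a` is a two-step path `a → b → c` in `Λ`, with `b = a ◁ x` and
`c = b ◁ y`. Each `σ_T` becomes `(b, c) ↦ (T a b c, c)` in the coordinates `(b, c)`, while `f ⊗ f`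
preserves these coordinates for every morphism `f`. Since every `(b, c)` is attained and determines
the path, a morphism intertwines `σ_{T₁}` and `σ_{T₂}` exactly when `T₁ = T₂`; an isomorphism
exists because `X₁` and `X₂` are both identified with `Λ` at each `λ`.
-/

section PathVertices

variable {Λ X : Type*} {act : Λ → X → Λ}

/-- The vertices after the starting point `a` of the two-step path `a → a ◁ x → (a ◁ x) ◁ y`
in `Λ` traced by a pair `(x, y)`. -/
def pathVertices (act : Λ → X → Λ) (a : Λ) (p : X × X) : Λ × Λ :=
  (act a p.1, act (act a p.1) p.2)

theorem pathVertices_injective (hact : ∀ a, Function.Injective (act a)) (a : Λ) :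
    Function.Injective (pathVertices act a) := by
  rintro ⟨x, y⟩ ⟨x', y'⟩ h
  obtain ⟨hfst, hsnd⟩ := Prod.mk.inj h
  obtain rfl : x = x' := hact a hfst
  obtain rfl : y = y' := hact _ hsnd
  rfl

theorem pathVertices_surjective (hact : ∀ a, Function.Surjective (act a)) (a : Λ) :
    Function.Surjective (pathVertices act a) := by
  rintro ⟨b, c⟩
  obtain ⟨x, rfl⟩ := hact a b
  obtain ⟨y, rfl⟩ := hact (act a x) c
  exact ⟨(x, y), rfl⟩

theorem pathVertices_sigmaTMap {dv : Λ → Λ → X} (hdv : ∀ a b, act a (dv a b) = b)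
    (T : Λ → Λ → Λ → Λ) (a : Λ) (p : X × X) :
    pathVertices act a (sigmaTMap act dv T a p) =
      (T a (pathVertices act a p).1 (pathVertices act a p).2, (pathVertices act a p).2) := by
  simp only [pathVertices, sigmaTMap, sigmaTL, sigmaTR, hdv]

end PathVertices

section Morphisms

variable {Λ X1 X2 : Type*} {act1 : Λ → X1 → Λ} {act2 : Λ → X2 → Λ}

theorem pathVertices_tensorSq {f : Λ → X1 → X2} (hf : ∀ a x, act2 a (f a x) = act1 a x)
    (a : Λ) (p : X1 × X1) :
    pathVertices act2 a (tensorSq act1 f a p) = pathVertices act1 a p := by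
  simp only [pathVertices, tensorSq, hf]

theorem tensorSq_sigmaTMap_eq_iff {f : Λ → X1 → X2} {dv1 : Λ → Λ → X1} {dv2 : Λ → Λ → X2}
    (hf : ∀ a x, act2 a (f a x) = act1 a x) (hdv1 : ∀ a b, act1 a (dv1 a b) = b)
    (hdv2 : ∀ a b, act2 a (dv2 a b) = b) (hact2 : ∀ a, Function.Injective (act2 a))
    (T1 T2 : Λ → Λ → Λ → Λ) (a : Λ) (p : X1 × X1) :
    tensorSq act1 f a (sigmaTMap act1 dv1 T1 a p) =
        sigmaTMap act2 dv2 T2 a (tensorSq act1 f a p) ↔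
      T1 a (pathVertices act1 a p).1 (pathVertices act1 a p).2 =
        T2 a (pathVertices act1 a p).1 (pathVertices act1 a p).2 := by
  rw [← (pathVertices_injective hact2 a).eq_iff, pathVertices_tensorSq hf,
    pathVertices_sigmaTMap hdv1, pathVertices_sigmaTMap hdv2, pathVertices_tensorSq hf,
    Prod.mk_left_inj]

theorem forall_tensorSq_sigmaTMap_eq_iff {f : Λ → X1 → X2} {dv1 : Λ → Λ → X1}
    {dv2 : Λ → Λ → X2} (hf : ∀ a x, act2 a (f a x) = act1 a x)
    (hdv1 : ∀ a b, act1 a (dv1 a b) = b) (hdv2 : ∀ a b, act2 a (dv2 a b) = b)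
    (hact2 : ∀ a, Function.Injective (act2 a)) {T1 T2 : Λ → Λ → Λ → Λ} :
    (∀ a p, tensorSq act1 f a (sigmaTMap act1 dv1 T1 a p) =
        sigmaTMap act2 dv2 T2 a (tensorSq act1 f a p)) ↔ T1 = T2 := by
  simp only [tensorSq_sigmaTMap_eq_iff hf hdv1 hdv2 hact2]
  constructor
  · intro hT
    funext a b c
    have hact1 (d : Λ) : Function.Surjective (act1 d) :=
      Function.RightInverse.surjective (hdv1 d)
    obtain ⟨p, hp⟩ := pathVertices_surjective hact1 a (b, c)
    simpa only [hp] using hT a p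
  · rintro rfl a p
    rfl

theorem exists_bijective_morphism (hact1 : ∀ a, Function.Bijective (act1 a))
    (hact2 : ∀ a, Function.Bijective (act2 a)) :
    ∃ f : Λ → X1 → X2,
      (∀ a x, act2 a (f a x) = act1 a x) ∧ ∀ a, Function.Bijective (f a) := by
  let e (a : Λ) : X2 ≃ Λ := Equiv.ofBijective (act2 a) (hact2 a)
  exact ⟨fun a x => (e a).symm (act1 a x), fun a x => (e a).apply_symm_apply (act1 a x),
    fun a => (e a).symm.bijective.comp (hact1 a)⟩

end Morphisms

theorem sigmaT_equivalent_iff_ternary_eq_general {Λ X1 X2 : Type*}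
    (act1 : Λ → X1 → Λ) (act2 : Λ → X2 → Λ)
    (dv1 : Λ → Λ → X1)
    (hdv11 : ∀ l m, act1 l (dv1 l m) = m)
    (hdv12 : ∀ l x, dv1 l (act1 l x) = x)
    (dv2 : Λ → Λ → X2)
    (hdv21 : ∀ l m, act2 l (dv2 l m) = m)
    (hdv22 : ∀ l x, dv2 l (act2 l x) = x)
    (T1 T2 : Λ → Λ → Λ → Λ) :
    (∃ f : Λ → X1 → X2,
        (∀ l x, act2 l (f l x) = act1 l x) ∧
        (∀ l, Function.Bijective (f l)) ∧
        (∀ lam p, tensorSq act1 f lam (sigmaTMap act1 dv1 T1 lam p)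
            = sigmaTMap act2 dv2 T2 lam (tensorSq act1 f lam p)))
      ↔ T1 = T2 := by
  have hact1 (l : Λ) : Function.Bijective (act1 l) :=
    Function.bijective_iff_has_inverse.2 ⟨dv1 l, hdv12 l, hdv11 l⟩
  have hact2 (l : Λ) : Function.Bijective (act2 l) :=
    Function.bijective_iff_has_inverse.2 ⟨dv2 l, hdv22 l, hdv21 l⟩
  have hact2_inj (l : Λ) : Function.Injective (act2 l) := (hact2 l).injective
  constructor
  · rintro ⟨f, hf, -, hcomm⟩
    exact (forall_tensorSq_sigmaTMap_eq_iff hf hdv11 hdv21 hact2_inj).1 hcomm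
  · intro hT
    obtain ⟨f, hf, hbij⟩ := exists_bijective_morphism hact1 hact2
    exact ⟨f, hf, hbij, (forall_tensorSq_sigmaTMap_eq_iff hf hdv11 hdv21 hact2_inj).2 hT⟩

/-- For `i = 1, 2`, let `X_i` be a dynamical set over `Λ` of PH type (with left
division `dv_i`) and `T_i` a ternary operation satisfying (E1) and (E2), with
associated dynamical Yang–Baxter map `σ_i = σ_{T_i}`. Then `(X_1, σ_1)` and
`(X_2, σ_2)` are equivalent if and only if `T_1 = T_2`. -/
theorem sigmaT_equivalent_iff_ternary_eq {Λ X1 X2 : Type*} [Nonempty Λ]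
    (act1 : Λ → X1 → Λ) (act2 : Λ → X2 → Λ)
    (hPH1 : Function.Bijective fun p : Λ × X1 => (p.1, act1 p.1 p.2))
    (hPH2 : Function.Bijective fun p : Λ × X2 => (p.1, act2 p.1 p.2))
    (dv1 : Λ → Λ → X1)
    (hdv11 : ∀ l m, act1 l (dv1 l m) = m)
    (hdv12 : ∀ l x, dv1 l (act1 l x) = x)
    (dv2 : Λ → Λ → X2)
    (hdv21 : ∀ l m, act2 l (dv2 l m) = m)
    (hdv22 : ∀ l x, dv2 l (act2 l x) = x)
    (T1 T2 : Λ → Λ → Λ → Λ)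
    (hT1 : TernE1 T1 ∧ TernE2 T1) (hT2 : TernE1 T2 ∧ TernE2 T2) :
    (∃ f : Λ → X1 → X2,
        (∀ l x, act2 l (f l x) = act1 l x) ∧
        (∀ l, Function.Bijective (f l)) ∧
        (∀ lam p, tensorSq act1 f lam (sigmaTMap act1 dv1 T1 lam p)
            = sigmaTMap act2 dv2 T2 lam (tensorSq act1 f lam p)))
      ↔ T1 = T2 :=
  sigmaT_equivalent_iff_ternary_eq_general act1 act2 dv1 hdv11 hdv12 dv2 hdv21 hdv22 T1 T2
end

section
/- Let X be a dynamical set over Λ of PH type, T = ⟨-,-,-⟩ a ternary operation on Λ satisfying (E1) and (E2), and σ_T the associated dynamical Yang–Baxter map on X. Then σ_T is invertible, i.e. σ_T(λ) : X × X → X × X is bijective for every λ ∈ Λ, if and only if for all a, c ∈ Λ the map Λ → Λ, x ↦ ⟨a, x, c⟩, is bijective. -/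
/- A pair `(x, y) ∈ X × X` based at `λ` is the same thing as the pair of points
`(λ ◁ x, (λ ◁ x) ◁ y)`. In these coordinates `σ_T(λ)` fixes the end point `c` and moves only the
midpoint `b`, to `⟨λ, b, c⟩`. -/

open Function

theorem bijective_prodMk_snd_iff {α β γ : Type*} (f : α → β → γ) :
    Bijective (fun p : α × β => (f p.1 p.2, p.2)) ↔ ∀ c, Bijective fun x => f x c := by
  constructor
  · intro hf c
    constructor
    · intro x y hxy
      exact congrArg Prod.fst (hf.injective (a₁ := (x, c)) (a₂ := (y, c)) (Prod.ext hxy rfl))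
    · intro z
      obtain ⟨⟨x, d⟩, hx⟩ := hf.surjective (z, c)
      obtain ⟨hz, rfl⟩ := Prod.mk.inj hx
      exact ⟨x, hz⟩
  · intro hf
    constructor
    · rintro ⟨x, c⟩ ⟨y, d⟩ hxy
      obtain ⟨hfst, rfl⟩ := Prod.mk.inj hxy
      exact Prod.ext ((hf c).injective hfst) rfl
    · rintro ⟨z, c⟩
      obtain ⟨x, hx⟩ := (hf c).surjective z
      exact ⟨(x, c), Prod.ext hx rfl⟩

section LeftDivision

variable {Λ X : Type*} (act : Λ → X → Λ) (dv : Λ → Λ → X)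
  (act_dv : ∀ l m, act l (dv l m) = m) (dv_act : ∀ l x, dv l (act l x) = x)

/-- The identification `x ↦ λ ◁ x` of `X` with `Λ` at a base point `λ` of a dynamical set of PH
type, with inverse the left division `μ ↦ λ \ μ`. -/
def actEquiv (lam : Λ) : X ≃ Λ where
  toFun := act lam
  invFun := dv lam
  left_inv := dv_act lam
  right_inv := act_dv lam

/-- The coordinates `(x, y) ↦ (λ ◁ x, (λ ◁ x) ◁ y)` on `X × X`: the midpoint and the end point of
the two-step path from `λ` with steps `x` and `y`. -/
def pathEquiv (lam : Λ) : X × X ≃ Λ × Λ :=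
  (actEquiv act dv act_dv dv_act lam).prodShear
    fun x => actEquiv act dv act_dv dv_act (act lam x)

theorem pathEquiv_semiconj_sigmaTMap (T : Λ → Λ → Λ → Λ) (lam : Λ) :
    Semiconj (pathEquiv act dv act_dv dv_act lam) (sigmaTMap act dv T lam)
      fun p => (T lam p.1 p.2, p.2) := by
  rintro ⟨x, y⟩
  simp only [pathEquiv, actEquiv, Equiv.prodShear_apply, Equiv.coe_fn_mk, sigmaTMap, sigmaTL,
    sigmaTR, act_dv]

end LeftDivision

theorem sigmaT_invertible_iff_general {Λ X : Type*} (act : Λ → X → Λ) (dv : Λ → Λ → X)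
    (act_dv : ∀ l m, act l (dv l m) = m) (dv_act : ∀ l x, dv l (act l x) = x)
    (T : Λ → Λ → Λ → Λ) (lam : Λ) :
    Bijective (sigmaTMap act dv T lam) ↔ ∀ c, Bijective fun x => T lam x c := by
  let e := pathEquiv act dv act_dv dv_act lam
  calc Bijective (sigmaTMap act dv T lam)
    _ ↔ Bijective (e ∘ sigmaTMap act dv T lam) := (e.comp_bijective _).symm
    _ ↔ Bijective ((fun p : Λ × Λ => (T lam p.1 p.2, p.2)) ∘ e) := by
      rw [(pathEquiv_semiconj_sigmaTMap act dv act_dv dv_act T lam).comp_eq]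
    _ ↔ Bijective fun p : Λ × Λ => (T lam p.1 p.2, p.2) := e.bijective_comp _
    _ ↔ ∀ c, Bijective fun x => T lam x c := bijective_prodMk_snd_iff (T lam)

/-- For a dynamical set `(X, act)` of PH type (with left division `dv`) and a
ternary operation `T` satisfying (E1) and (E2), the dynamical Yang–Baxter map
`σ_T` is invertible if and only if `x ↦ ⟨a, x, c⟩` is bijective for all
`a, c ∈ Λ`. -/
theorem sigmaT_invertible_iff {Λ X : Type*} [Nonempty Λ] (act : Λ → X → Λ)
    (hPH : Function.Bijective fun p : Λ × X => (p.1, act p.1 p.2))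
    (dv : Λ → Λ → X)
    (hdv1 : ∀ l m, act l (dv l m) = m)
    (hdv2 : ∀ l x, dv l (act l x) = x)
    (T : Λ → Λ → Λ → Λ) (hE1 : TernE1 T) (hE2 : TernE2 T) :
    (∀ lam, Function.Bijective (sigmaTMap act dv T lam))
      ↔ ∀ a c : Λ, Function.Bijective fun x => T a x c :=
  forall_congr' fun lam => sigmaT_invertible_iff_general act dv hdv1 hdv2 T lam
end
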